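/- Let $\mathbb{P}$ be a probability distribution on $\mathcal{X}$ and let $k\colon \mathcal{X}\times\mathcal{X}\to\mathbb{R}$ be a measurable bounded kernel. Define $h(x,x',y,y') = k(x,x') + k(y,y') - k(x,y') - k(x',y)$ and, for two size-$B$ blocks $\mathbf{X}=(X_1,\dots,X_B)$, $\mathbf{Y}=(Y_1,\dots,Y_B)$, define $\mathrm{MMD}_s^2(\mathbf{X},\mathbf{Y}) = \binom{B}{2}^{-1}\tfrac12\sum_{i=1}^{B}\sum_{j\neq i} h(X_i,X_j,Y_i,Y_j)$ (equivalently $\frac{1}{B(B-1)}\sum_{i}\sum_{j\neq i} h(X_i,X_j,Y_i,Y_j)$). Suppose $\mathbf{X}^{(1)},\dots,\mathbf{X}^{(N)}$ are $N$ blocks of size $B\ge 2$ and $\mathbf{Y}$ is one block of size $B$, with all $(N+1)B$ coordinates i.i.d. with law $\mathbb{P}$ (the null hypothesis $H_0$). Then the variance $\sigma^2(B) = \mathrm{Var}\big(\tfrac{1}{N}\sum_{i=1}^{N}\mathrm{MMD}_s^2(\mathbf{X}^{(i)},\mathbf{Y})\big)$ satisfies $\sigma^2(B) = \binom{B}{2}^{-1}\big(C_2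 + \tfrac{C_1 - C_2}{N}\big)$, where $C_1 = \mathbf{E}[h^2(X,X',Y,Y')]$ and $C_2 = \mathrm{Cov}[h(X,X',Y,Y'),\, h(X'',X''',Y,Y')]$ for $X,X',X'',X''',Y,Y'$ i.i.d. with law $\mathbb{P}$. -/

import Mathlib

open MeasureTheory ProbabilityTheory Finset

/-!
The argument is Hoeffding's variance computation for a degenerate U-statistic. All observations are
put on one index set `Option (Fin N) × Fin B`, where `some i` is the `i`-th reference block and
`none` is the block `Y`, so that their joint law is a single product measure
(`measurePreserving_blocks`). With `u i a b = h (X⁽ⁱ⁾_a) (X⁽ⁱ⁾_b) (Y_a) (Y_b)` (`pairTerm`), the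
variance is a sum of the moments `E[u i a b * u j c d]` over `a ≠ b` and `c ≠ d`.

The function `h x x' y y'` changes sign when `x'` and `y'` are exchanged. Exchanging `X⁽ⁱ⁾_b` and
`Y_b` preserves the joint law, so any moment in which the index `b` enters through `u i a b` alone
vanishes (`integral_eq_zero_of_swap`); this replaces the usual conditioning argument for
degeneracy. Hence only the terms with `{a, b} = {c, d}` survive: they equal `C₁` if `i = j` and, as
`E h = 0`, they equal `C₂` if `i ≠ j`. Counting them gives the formula.
-/

/-! ### Families of i.i.d. observations -/

section Pi

variable {𝓧 : Type*} [MeasurableSpace 𝓧] (P : Measure 𝓧) [IsProbabilityMeasure P]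

/-- Distinct coordinates of an i.i.d. family again form an i.i.d. family. -/
lemma measurePreserving_comp_injective {ι κ : Type*} [Fintype ι] [Fintype κ]
    {e : κ → ι} (he : Function.Injective e) :
    MeasurePreserving (fun (w : ι → 𝓧) (j : κ) => w (e j))
      (Measure.pi fun _ : ι => P) (Measure.pi fun _ : κ => P) := by
  refine ⟨by fun_prop, ?_⟩
  have hind : iIndepFun (fun (i : ι) (w : ι → 𝓧) => w i) (Measure.pi fun _ : ι => P) :=
    iIndepFun_pi (μ := fun _ : ι => P) (X := fun _ x => x) fun _ => aemeasurable_id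
  have hpre := (iIndepFun_iff_map_fun_eq_pi_map
    (fun j => (measurable_pi_apply (e j)).aemeasurable)).1 (hind.precomp he)
  rw [hpre]
  congr 1
  funext j
  exact (measurePreserving_eval (fun _ : ι => P) (e j)).map_eq

lemma integral_comp_injective {ι κ : Type*} [Fintype ι] [Fintype κ]
    {e : κ → ι} (he : Function.Injective e) {F : (κ → 𝓧) → ℝ} (hF : Measurable F) :
    ∫ w : ι → 𝓧, F (fun j => w (e j)) ∂(Measure.pi fun _ : ι => P)
      = ∫ v, F v ∂(Measure.pi fun _ : κ => P) := by
  have hmp := measurePreserving_comp_injective P he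
  rw [← hmp.map_eq, integral_map hmp.aemeasurable hF.aestronglyMeasurable]

/-- The i.i.d. law is invariant under exchanging two coordinates, so a function that changes sign
under such an exchange has mean zero. -/
lemma integral_eq_zero_of_swap {ι : Type*} [Fintype ι] [DecidableEq ι] (p q : ι)
    {F : (ι → 𝓧) → ℝ} (hF : Measurable F)
    (hswap : ∀ w, F (fun j => w (Equiv.swap p q j)) = -F w) :
    ∫ w, F w ∂(Measure.pi fun _ : ι => P) = 0 := by
  have hinv := integral_comp_injective P (Equiv.swap p q).injective hF
  simp only [hswap, integral_neg] at hinv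
  linarith

/-- The coordinates of the blocks `w.1 0, …, w.1 (N - 1)` and `w.2`, listed as one family: the
index `some i` stands for the block `w.1 i` and `none` for the block `w.2`. -/
def blocks {N B : ℕ} (w : (Fin N → Fin B → 𝓧) × (Fin B → 𝓧)) :
    Option (Fin N) × Fin B → 𝓧 :=
  fun p => p.1.elim (w.2 p.2) fun i => w.1 i p.2

lemma measurePreserving_blocks (N B : ℕ) :
    MeasurePreserving (blocks (𝓧 := 𝓧) (N := N) (B := B))
      ((Measure.pi fun _ : Fin N => Measure.pi fun _ : Fin B => P).prod
        (Measure.pi fun _ : Fin B => P))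
      (Measure.pi fun _ => P) := by
  have hmeas : Measurable (blocks (𝓧 := 𝓧) (N := N) (B := B)) := by
    refine measurable_pi_lambda _ fun p => ?_
    obtain ⟨_ | i, b⟩ := p
    · exact (measurable_pi_apply b).comp measurable_snd
    · exact (measurable_pi_apply b).comp ((measurable_pi_apply i).comp measurable_fst)
  refine ⟨hmeas, (Measure.pi_eq fun s hs => ?_).symm⟩
  have hpre : blocks (𝓧 := 𝓧) (N := N) (B := B) ⁻¹' (Set.univ.pi s)
      = (Set.univ.pi fun i => Set.univ.pi fun b => s (some i, b)) ×ˢ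
        (Set.univ.pi fun b => s (none, b)) := by
    ext w
    simp only [Set.mem_preimage, Set.mem_pi, Set.mem_univ, true_implies, Prod.forall,
      Option.forall, Set.mem_prod, blocks, Option.elim]
    exact and_comm
  rw [Measure.map_apply hmeas (.univ_pi hs), hpre, Measure.prod_prod]
  simp only [Measure.pi_pi, Fintype.prod_prod_type, Fintype.prod_option]
  exact mul_comm _ _

end Pi

/-! ### Moments of the summands -/

section Moments

variable {𝓧 : Type*} {N B : ℕ}

/-- The summand `h (X⁽ⁱ⁾_a) (X⁽ⁱ⁾_b) (Y_a) (Y_b)` of the statistic, as a function of the joint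
family of observations. -/
def pairTerm (h : 𝓧 → 𝓧 → 𝓧 → 𝓧 → ℝ) (i : Fin N) (a b : Fin B)
    (w : Option (Fin N) × Fin B → 𝓧) : ℝ :=
  h (w (some i, a)) (w (some i, b)) (w (none, a)) (w (none, b))

variable {h : 𝓧 → 𝓧 → 𝓧 → 𝓧 → ℝ}

lemma pairTerm_comm (hsymm : ∀ x x' y y', h x' x y' y = h x x' y y') (i : Fin N) (a b : Fin B) :
    pairTerm h i b a = pairTerm h i a b :=
  funext fun _ => hsymm _ _ _ _

/-- Exchanging `X⁽ⁱ⁾_b` and `Y_b` flips the sign of the term `(i, a, b)`. -/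
lemma pairTerm_swap (hanti : ∀ x x' y y', h x y' y x' = -h x x' y y') (i : Fin N) {a b : Fin B}
    (hab : a ≠ b) (w : Option (Fin N) × Fin B → 𝓧) :
    pairTerm h i a b (fun p => w (Equiv.swap (some i, b) (none, b) p)) = -pairTerm h i a b w := by
  have e1 : Equiv.swap (some i, b) (none, b) (some i, a) = (some i, a) :=
    Equiv.swap_apply_of_ne_of_ne (by simp [hab]) (by simp)
  have e2 : Equiv.swap (some i, b) (none, b) (none, a) = (none, a) :=
    Equiv.swap_apply_of_ne_of_ne (by simp) (by simp [hab])
  simp only [pairTerm, e1, e2, Equiv.swap_apply_left, Equiv.swap_apply_right]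
  exact hanti _ _ _ _

/-- The exchange of `X⁽ⁱ⁾_b` and `Y_b` does not affect terms whose indices avoid `b`. -/
lemma pairTerm_swap_of_ne (i j : Fin N) {b c d : Fin B} (hc : c ≠ b) (hd : d ≠ b)
    (w : Option (Fin N) × Fin B → 𝓧) :
    pairTerm h j c d (fun p => w (Equiv.swap (some i, b) (none, b) p)) = pairTerm h j c d w := by
  have key : ∀ (o : Option (Fin N)) {c : Fin B}, c ≠ b →
      Equiv.swap (some i, b) (none, b) (o, c) = (o, c) := fun o c hc =>
    Equiv.swap_apply_of_ne_of_ne (by simp [hc]) (by simp [hc])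
  simp only [pairTerm, key _ hc, key _ hd]

variable [MeasurableSpace 𝓧]

lemma measurable_pairTerm
    (hmeas : Measurable fun q : 𝓧 × 𝓧 × 𝓧 × 𝓧 => h q.1 q.2.1 q.2.2.1 q.2.2.2)
    (i : Fin N) (a b : Fin B) : Measurable (pairTerm h i a b) :=
  hmeas.comp (g := fun q : 𝓧 × 𝓧 × 𝓧 × 𝓧 => h q.1 q.2.1 q.2.2.1 q.2.2.2)
    (f := fun w : Option (Fin N) × Fin B → 𝓧 =>
      (w (some i, a), w (some i, b), w (none, a), w (none, b))) (by fun_prop)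

variable (P : Measure 𝓧) [IsProbabilityMeasure P]

lemma integral_pairTerm
    (hmeas : Measurable fun q : 𝓧 × 𝓧 × 𝓧 × 𝓧 => h q.1 q.2.1 q.2.2.1 q.2.2.2)
    (hanti : ∀ x x' y y', h x y' y x' = -h x x' y y') (i : Fin N) {a b : Fin B} (hab : a ≠ b) :
    ∫ w, pairTerm h i a b w ∂(Measure.pi fun _ => P) = 0 :=
  integral_eq_zero_of_swap P (some i, b) (none, b) (measurable_pairTerm hmeas i a b)
    (pairTerm_swap hanti i hab)

/-- Two terms whose index sets `{a, b}` and `{c, d}` differ are uncorrelated; otherwise the mixed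
moment depends only on whether the two reference blocks coincide. -/
lemma integral_pairTerm_mul
    (hmeas : Measurable fun q : 𝓧 × 𝓧 × 𝓧 × 𝓧 => h q.1 q.2.1 q.2.2.1 q.2.2.2)
    (hsymm : ∀ x x' y y', h x' x y' y = h x x' y y')
    (hanti : ∀ x x' y y', h x y' y x' = -h x x' y y')
    (i j : Fin N) {a b c d : Fin B} (hab : a ≠ b) :
    ∫ w, pairTerm h i a b w * pairTerm h j c d w ∂(Measure.pi fun _ => P)
      = if (c, d) = (a, b) ∨ (c, d) = (b, a) then
          (if j = i then ∫ w : Fin 4 → 𝓧, (h (w 0) (w 1) (w 2) (w 3)) ^ 2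
            ∂(Measure.pi fun _ : Fin 4 => P)
          else ∫ w : Fin 6 → 𝓧, h (w 0) (w 1) (w 4) (w 5) * h (w 2) (w 3) (w 4) (w 5)
            ∂(Measure.pi fun _ : Fin 6 => P))
        else 0 := by
  have vanish : ∀ {a b : Fin B}, a ≠ b → c ≠ b → d ≠ b →
      ∫ w, pairTerm h i a b w * pairTerm h j c d w ∂(Measure.pi fun _ => P) = 0 := by
    intro a b hab hc hd
    refine integral_eq_zero_of_swap P (some i, b) (none, b)
      ((measurable_pairTerm hmeas i a b).mul (measurable_pairTerm hmeas j c d)) fun w => ?_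
    rw [pairTerm_swap hanti i hab, pairTerm_swap_of_ne i j hc hd, neg_mul]
  have hu : (c, d) = (a, b) ∨ (c, d) = (b, a) → pairTerm h j c d = pairTerm h j a b := by
    rintro (hset | hset) <;> obtain ⟨rfl, rfl⟩ := Prod.mk.inj hset
    · rfl
    · exact pairTerm_comm hsymm _ _ _
  have hba : b ≠ a := hab.symm
  split_ifs with hset hij
  · subst hij
    rw [hu hset]
    have he : Function.Injective
        (![(some j, a), (some j, b), (none, a), (none, b)] :
          Fin 4 → Option (Fin N) × Fin B) := by
      intro s t hst
      fin_cases s <;> fin_cases t <;> simp [hab, hba] at hst ⊢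
    rw [← integral_comp_injective P he
      (F := fun w : Fin 4 → 𝓧 => (h (w 0) (w 1) (w 2) (w 3)) ^ 2)
      ((hmeas.comp (f := fun w : Fin 4 → 𝓧 => (w 0, w 1, w 2, w 3)) (by fun_prop)).pow_const 2)]
    refine integral_congr_ae (.of_forall fun w => ?_)
    simp [pairTerm, sq]
  · rw [hu hset]
    have he : Function.Injective
        (![(some i, a), (some i, b), (some j, a), (some j, b), (none, a), (none, b)] :
          Fin 6 → Option (Fin N) × Fin B) := by
      have hij' : i ≠ j := Ne.symm hij
      intro s t hst
      fin_cases s <;> fin_cases t <;> simp [hab, hba, hij, hij'] at hst ⊢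
    rw [← integral_comp_injective P he
      (F := fun w : Fin 6 → 𝓧 => h (w 0) (w 1) (w 4) (w 5) * h (w 2) (w 3) (w 4) (w 5))
      ((hmeas.comp (f := fun w : Fin 6 → 𝓧 => (w 0, w 1, w 4, w 5)) (by fun_prop)).mul
        (hmeas.comp (f := fun w : Fin 6 → 𝓧 => (w 2, w 3, w 4, w 5)) (by fun_prop)))]
    refine integral_congr_ae (.of_forall fun w => ?_)
    simp [pairTerm]
  · by_cases hb : c ≠ b ∧ d ≠ b
    · exact vanish hab hb.1 hb.2
    · -- the index `b` occurs in the second term, so `a` does not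
      have ha : c ≠ a ∧ d ≠ a := by
        simp only [Prod.mk.injEq] at hset
        grind
      rw [← pairTerm_comm hsymm i a b]
      exact vanish hab.symm ha.1 ha.2

end Moments

/-! ### Counting and the variance formula -/

/-- The number of nonvanishing moments: each `(a, b)` with `a ≠ b` is matched by `(a, b)` and
`(b, a)`, in the same block or in one of the `N - 1` others. -/
lemma sum_moments {N B : ℕ} (C₁ C₂ : ℝ) :
    ∑ p ∈ (univ : Finset (Fin N)) ×ˢ (univ : Finset (Fin B)).offDiag,
      ∑ q ∈ (univ : Finset (Fin N)) ×ˢ (univ : Finset (Fin B)).offDiag,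
        (if q.2 = p.2 ∨ q.2 = p.2.swap then (if q.1 = p.1 then C₁ else C₂) else 0)
      = N * (B * (B - 1)) * (2 * (C₁ + (N - 1) * C₂)) := by
  have inner : ∀ p ∈ (univ : Finset (Fin N)) ×ˢ (univ : Finset (Fin B)).offDiag,
      ∑ q ∈ (univ : Finset (Fin N)) ×ˢ (univ : Finset (Fin B)).offDiag,
        (if q.2 = p.2 ∨ q.2 = p.2.swap then (if q.1 = p.1 then C₁ else C₂) else 0)
      = 2 * (C₁ + (N - 1) * C₂) := by
    rintro ⟨i, a, b⟩ hp
    have hab : a ≠ b := by simpa using hp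
    have hpair : (univ : Finset (Fin B)).offDiag.filter
        (fun r => r = (a, b) ∨ r = (b, a)) = {(a, b), (b, a)} := by
      ext ⟨c, d⟩
      simp only [mem_filter, mem_offDiag, mem_univ, true_and, mem_insert, mem_singleton,
        Prod.mk.injEq]
      grind
    have hblock : ∑ j : Fin N, (if j = i then C₁ else C₂) = C₁ + (N - 1) * C₂ := by
      have : ∀ j : Fin N, (if j = i then C₁ else C₂) = (if j = i then C₁ - C₂ else 0) + C₂ := by
        intro j; split_ifs <;> ring
      simp only [this, sum_add_distrib, sum_ite_eq', mem_univ, if_true, sum_const, card_univ,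
        Fintype.card_fin, nsmul_eq_mul]
      ring
    simp only [sum_product, Prod.swap_prod_mk]
    simp only [← sum_filter (s := offDiag _), hpair]
    rw [sum_comm' (t' := {(a, b), (b, a)}) (s' := fun _ => univ) (by simp)]
    simp only [sum_const, card_pair (show (a, b) ≠ (b, a) by simp [hab]), hblock,
      nsmul_eq_mul, Nat.cast_ofNat]
  rw [sum_congr rfl inner, sum_const, card_product, offDiag_card, nsmul_eq_mul]
  simp only [card_univ, Fintype.card_fin, Nat.cast_mul]
  rw [Nat.cast_sub (Nat.le_mul_self B), Nat.cast_mul]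
  ring

/-- Variance of the Scan-B statistic under the null hypothesis
(Lemma 3.1 of Li et al.): with `N` pre-change blocks `X⁽¹⁾,…,X⁽ᴺ⁾` of size
`B ≥ 2` and one post-change block `Y` of size `B`, all `(N+1)B` coordinates
i.i.d. with law `P` (modeled via the product measure), the variance of
`(1/N) ∑ᵢ MMD_s²(X⁽ⁱ⁾, Y)` equals `(B choose 2)⁻¹ (C₂ + (C₁ - C₂)/N)`, where
`C₁ = E[h²(X,X',Y,Y')]` and `C₂ = Cov[h(X,X',Y,Y'), h(X'',X''',Y,Y')]` for
`X,X',X'',X''',Y,Y'` i.i.d. with law `P`. -/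
theorem scanB_variance_under_null
    {𝓧 : Type*} [MeasurableSpace 𝓧]
    (P : Measure 𝓧) [IsProbabilityMeasure P]
    (k : 𝓧 → 𝓧 → ℝ)
    (hk_meas : Measurable (Function.uncurry k))
    (hk_symm : ∀ x y : 𝓧, k x y = k y x)
    (hk_bdd : ∃ C : ℝ, ∀ x y : 𝓧, |k x y| ≤ C)
    (h : 𝓧 → 𝓧 → 𝓧 → 𝓧 → ℝ)
    (hh : ∀ x x' y y' : 𝓧, h x x' y y' = k x x' + k y y' - k x y' - k x' y)
    (N B : ℕ) (hN : 0 < N) (hB : 2 ≤ B)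
    -- `C₁ = E[h²(X,X',Y,Y')]` for `X,X',Y,Y'` i.i.d. with law `P`
    (C₁ : ℝ)
    (hC₁ : C₁ = ∫ w : Fin 4 → 𝓧, (h (w 0) (w 1) (w 2) (w 3)) ^ 2
        ∂(Measure.pi fun _ : Fin 4 => P))
    -- `C₂ = Cov[h(X,X',Y,Y'), h(X'',X''',Y,Y')]`
    -- for `X,X',X'',X''',Y,Y'` i.i.d. with law `P`
    (C₂ : ℝ)
    (hC₂ : C₂ =
      (∫ w : Fin 6 → 𝓧, h (w 0) (w 1) (w 4) (w 5) * h (w 2) (w 3) (w 4) (w 5)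
          ∂(Measure.pi fun _ : Fin 6 => P))
        - (∫ w : Fin 6 → 𝓧, h (w 0) (w 1) (w 4) (w 5)
            ∂(Measure.pi fun _ : Fin 6 => P))
          * (∫ w : Fin 6 → 𝓧, h (w 2) (w 3) (w 4) (w 5)
              ∂(Measure.pi fun _ : Fin 6 => P))) :
    -- the variance `σ²(B)` of `(1/N) ∑ᵢ MMD_s²(X⁽ⁱ⁾, Y)` under `H₀`
    variance
      (fun w : (Fin N → Fin B → 𝓧) × (Fin B → 𝓧) =>
        (1 / (N : ℝ)) * ∑ i : Fin N,
          (1 / ((B : ℝ) * ((B : ℝ) - 1))) *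
            ∑ a : Fin B, ∑ b ∈ Finset.univ.erase a,
              h (w.1 i a) (w.1 i b) (w.2 a) (w.2 b))
      ((Measure.pi fun _ : Fin N => Measure.pi fun _ : Fin B => P).prod
        (Measure.pi fun _ : Fin B => P))
      = ((B.choose 2 : ℝ))⁻¹ * (C₂ + (C₁ - C₂) / (N : ℝ)) := by
  have hmeas : Measurable fun q : 𝓧 × 𝓧 × 𝓧 × 𝓧 => h q.1 q.2.1 q.2.2.1 q.2.2.2 := by
    have hcomp : ∀ {f g : 𝓧 × 𝓧 × 𝓧 × 𝓧 → 𝓧}, Measurable f → Measurable g →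
        Measurable fun q => k (f q) (g q) := fun hf hg => hk_meas.comp (hf.prodMk hg)
    simp only [hh]
    exact (((hcomp (by fun_prop) (by fun_prop)).add (hcomp (by fun_prop) (by fun_prop))).sub
      (hcomp (by fun_prop) (by fun_prop))).sub (hcomp (by fun_prop) (by fun_prop))
  have hsymm : ∀ x x' y y', h x' x y' y = h x x' y y' := by
    intro x x' y y'
    rw [hh, hh, hk_symm x' x, hk_symm y' y]
    ring
  have hanti : ∀ x x' y y', h x y' y x' = -h x x' y y' := by
    intro x x' y y'
    rw [hh, hh, hk_symm y' y, hk_symm y x']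
    ring
  obtain ⟨C, hC⟩ := hk_bdd
  have hbdd : ∀ x x' y y', ‖h x x' y y'‖ ≤ 4 * C := by
    intro x x' y y'
    rw [hh, Real.norm_eq_abs, abs_le]
    have h1 := abs_le.1 (hC x x')
    have h2 := abs_le.1 (hC y y')
    have h3 := abs_le.1 (hC x y')
    have h4 := abs_le.1 (hC x' y)
    constructor <;> linarith [h1.1, h1.2, h2.1, h2.2, h3.1, h3.2, h4.1, h4.2]
  -- `C₂` is a plain second moment because `E h = 0`
  have hmean : ∫ w : Fin 6 → 𝓧, h (w 0) (w 1) (w 4) (w 5) ∂(Measure.pi fun _ : Fin 6 => P) = 0 := by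
    refine integral_eq_zero_of_swap P 1 5
      (hmeas.comp (f := fun w : Fin 6 → 𝓧 => (w 0, w 1, w 4, w 5)) (by fun_prop)) fun w => ?_
    have e0 : Equiv.swap (1 : Fin 6) 5 0 = 0 := by decide
    have e4 : Equiv.swap (1 : Fin 6) 5 4 = 4 := by decide
    simp only [e0, e4, Equiv.swap_apply_left, Equiv.swap_apply_right]
    exact hanti _ _ _ _
  rw [hmean, zero_mul, sub_zero] at hC₂
  let t : Finset (Fin N × Fin B × Fin B) := univ ×ˢ (univ : Finset (Fin B)).offDiag
  have ht : ∀ p ∈ t, p.2.1 ≠ p.2.2 := by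
    intro p hp
    simpa [t] using hp
  let S : (Option (Fin N) × Fin B → 𝓧) → ℝ := fun w => ∑ p ∈ t, pairTerm h p.1 p.2.1 p.2.2 w
  have hSmeas : Measurable S :=
    Finset.measurable_fun_sum _ fun p _ => measurable_pairTerm hmeas _ _ _
  have hint : ∀ p : Fin N × Fin B × Fin B,
      Integrable (pairTerm h p.1 p.2.1 p.2.2) (Measure.pi fun _ => P) := fun p =>
    .of_bound (measurable_pairTerm hmeas _ _ _).aestronglyMeasurable (4 * C)
      (.of_forall fun w => hbdd _ _ _ _)
  have hint2 : ∀ p q : Fin N × Fin B × Fin B,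
      Integrable (fun w => pairTerm h p.1 p.2.1 p.2.2 w * pairTerm h q.1 q.2.1 q.2.2 w)
        (Measure.pi fun _ => P) := fun p q =>
    (hint q).bdd_mul (c := 4 * C) (measurable_pairTerm hmeas _ _ _).aestronglyMeasurable
      (.of_forall fun w => hbdd _ _ _ _)
  have hSzero : ∫ w, S w ∂(Measure.pi fun _ => P) = 0 := by
    rw [integral_finsetSum _ fun p _ => hint p]
    exact sum_eq_zero fun p hp => integral_pairTerm P hmeas hanti p.1 (ht p hp)
  have hvar : variance S (Measure.pi fun _ => P)
      = N * (B * (B - 1)) * (2 * (C₁ + (N - 1) * C₂)) := by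
    rw [variance_of_integral_eq_zero hSmeas.aemeasurable hSzero, ← sum_moments C₁ C₂]
    simp only [S, sq, sum_mul_sum]
    rw [integral_finsetSum _ fun p _ => integrable_finsetSum _ fun q _ => hint2 p q]
    refine sum_congr rfl fun p hp => ?_
    rw [integral_finsetSum _ fun q _ => hint2 p q]
    refine sum_congr rfl fun q _ => ?_
    rw [integral_pairTerm_mul P hmeas hsymm hanti p.1 q.1 (ht p hp), ← hC₁, ← hC₂]
    rfl
  have hstat : (fun w : (Fin N → Fin B → 𝓧) × (Fin B → 𝓧) =>
      (1 / (N : ℝ)) * ∑ i : Fin N, (1 / ((B : ℝ) * ((B : ℝ) - 1))) *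
        ∑ a : Fin B, ∑ b ∈ Finset.univ.erase a, h (w.1 i a) (w.1 i b) (w.2 a) (w.2 b))
      = fun w => (1 / (N : ℝ) * (1 / ((B : ℝ) * ((B : ℝ) - 1)))) * S (blocks w) := by
    funext w
    rw [← mul_sum, mul_assoc]
    congr 2
    simp only [S, t, sum_product]
    refine sum_congr rfl fun i _ => ?_
    exact (sum_finset_product' _ _ _ fun r => by simp [eq_comm]).symm
  rw [hstat, variance_const_mul,
    (measurePreserving_blocks P N B).variance_fun_comp hSmeas.aemeasurable, hvar,
    Nat.cast_choose_two]
  have hN0 : (N : ℝ) ≠ 0 := by positivity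
  have hB0 : (B : ℝ) ≠ 0 := by positivity
  have hB1 : (B : ℝ) - 1 ≠ 0 := by
    have : (2 : ℝ) ≤ B := by exact_mod_cast hB
    linarith
  field_simp
  ring
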